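/- The denominator of the aligned rank statistic satisfies the identity x₀ᵀ(I − H)x₀ = (1/n₁ + 1/n₂)⁻¹ · [1 − (1/n₁ + 1/n₂)⁻¹ · (x̄₁ − x̄₂)ᵀ(XᵀX)⁻¹(x̄₁ − x̄₂)]. -/

import Mathlib

open Matrix Finset

/-!
Put `c = (1/n₁ + 1/n₂)⁻¹ = n₁n₂/(n₁+n₂)`. A direct computation gives `x₀ᵀx₀ = c` and
`Xᵀx₀ = c (x̄₁ − x̄₂)`, so `x₀ᵀHx₀ = (Xᵀx₀)ᵀ(XᵀX)⁻¹(Xᵀx₀)` is `c²` times the quadratic form of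
`(XᵀX)⁻¹` at `x̄₁ − x̄₂`.
-/

/-- The denominator of the aligned rank statistic satisfies
`x₀ᵀ(I − H)x₀ = (1/n₁ + 1/n₂)⁻¹ · [1 − (1/n₁ + 1/n₂)⁻¹ · (x̄₁ − x̄₂)ᵀ(XᵀX)⁻¹(x̄₁ − x̄₂)]`. -/
theorem stmt_4 (n₁ n₂ p : ℕ) (hn₁ : 0 < n₁) (hn₂ : 0 < n₂) (hp : 0 < p)
    (X₁ : Matrix (Fin n₁) (Fin p) ℝ) (X₂ : Matrix (Fin n₂) (Fin p) ℝ)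
    (X : Matrix (Fin n₁ ⊕ Fin n₂) (Fin p) ℝ) (hX : X = Matrix.fromRows X₁ X₂)
    (hcent : ∀ k, ∑ s, X s k = 0)
    (hinv : IsUnit (Xᵀ * X).det)
    (x₀ : (Fin n₁ ⊕ Fin n₂) → ℝ)
    (hx₀ : x₀ = Sum.elim (fun _ => (n₂ : ℝ) / (n₁ + n₂)) (fun _ => -(n₁ : ℝ) / (n₁ + n₂)))
    (H : Matrix (Fin n₁ ⊕ Fin n₂) (Fin n₁ ⊕ Fin n₂) ℝ)
    (hH : H = X * (Xᵀ * X)⁻¹ * Xᵀ)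
    (xbar₁ xbar₂ : Fin p → ℝ)
    (hxbar₁ : xbar₁ = fun k => (∑ j, X₁ j k) / n₁)
    (hxbar₂ : xbar₂ = fun k => (∑ j, X₂ j k) / n₂) :
    x₀ ⬝ᵥ ((1 - H) *ᵥ x₀) =
      (1 / (n₁ : ℝ) + 1 / (n₂ : ℝ))⁻¹ *
        (1 - (1 / (n₁ : ℝ) + 1 / (n₂ : ℝ))⁻¹ *
          ((xbar₁ - xbar₂) ⬝ᵥ ((Xᵀ * X)⁻¹ *ᵥ (xbar₁ - xbar₂)))) := by
  have h₁ : (n₁ : ℝ) ≠ 0 := by positivity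
  have h₂ : (n₂ : ℝ) ≠ 0 := by positivity
  have h₁₂ : (n₁ : ℝ) + n₂ ≠ 0 := by positivity
  set c : ℝ := (1 / (n₁ : ℝ) + 1 / (n₂ : ℝ))⁻¹ with hc
  have hc' : c = n₁ * n₂ / (n₁ + n₂) := by
    rw [hc, div_add_div _ _ h₁ h₂, inv_div]
    ring
  have hself : x₀ ⬝ᵥ x₀ = c := by
    rw [hc', hx₀]
    simp only [dotProduct, Fintype.sum_sum_type, Sum.elim_inl, Sum.elim_inr, sum_const,
      card_univ, Fintype.card_fin, nsmul_eq_mul]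
    field_simp
    ring
  have hproj : Xᵀ *ᵥ x₀ = c • (xbar₁ - xbar₂) := by
    ext k
    rw [hc', hx₀, hX, hxbar₁, hxbar₂]
    simp only [mulVec, dotProduct, Fintype.sum_sum_type, Sum.elim_inl, Sum.elim_inr,
      transpose_apply, fromRows_apply_inl, fromRows_apply_inr, ← sum_mul, Pi.smul_apply,
      Pi.sub_apply, smul_eq_mul]
    field_simp
    ring
  have hquad : x₀ ⬝ᵥ (H *ᵥ x₀) =
      (Xᵀ *ᵥ x₀) ⬝ᵥ ((Xᵀ * X)⁻¹ *ᵥ (Xᵀ *ᵥ x₀)) := by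
    rw [hH, ← mulVec_mulVec, ← mulVec_mulVec, dotProduct_mulVec, mulVec_transpose]
  rw [sub_mulVec, one_mulVec, dotProduct_sub, hself, hquad, hproj, mulVec_smul,
    smul_dotProduct, dotProduct_smul, smul_eq_mul, smul_eq_mul]
  ring
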